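/- arXiv:2405.13458 — 5 statements merged into one kernel-verified Lean document; each statement's English description precedes it below -/
import Mathlib

section
/- Let λ ≥ 2 and n ≥ 1 be integers, N ≤ λ^n, and for each 1 ≤ l ≤ N suppose there exist r_l ∈ ℕ and trigonometric polynomials p_l and g_l^{(r)} (1 ≤ r ≤ r_l) satisfying 1 − |p_l(ξ)|² = λ^n · Σ_{r=1}^{r_l} |g_l^{(r)}(ξ)|² for all ξ ∈ ℝⁿ. If N < λ^n, let p_l for l = N+1, …, λ^n be trigonometric polynomials with |p_l(ξ)|² = 1 for all ξ. Let ν_1, …, ν_{λ^n} be an enumeration of Λ and define τ(ξ) = λ^{−n} Σ_{l=1}^{λ^n} p_l(λξ) e^{i ν_l·ξ}. Then for all ξ ∈ ℝⁿ, 1 − Σ_{γ∈Γ} |τ(ξ + γ)|² = Σ_{l=1}^{N} Σ_{r=1}^{r_l} |g_l^{(r)}(λξ)|². -/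
open MeasureTheory Finset Filter Topology

noncomputable section

/-- `f` is a trigonometric polynomial on ℝⁿ: a finite sum ξ ↦ Σ_{k∈F} h(k) e^{−i k·ξ}. -/
def IsTrigPoly (n : ℕ) (f : (Fin n → ℝ) → ℂ) : Prop :=
  ∃ (F : Finset (Fin n → ℤ)) (h : (Fin n → ℤ) → ℂ),
    ∀ ξ : Fin n → ℝ,
      f ξ = ∑ k ∈ F, h k * Complex.exp (-Complex.I * ∑ i, (k i : ℂ) * (ξ i : ℂ))

/-- Λ = {0,…,λ−1}ⁿ as a finite subset of ℤⁿ. -/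
def Lambda (lam n : ℕ) : Finset (Fin n → ℤ) :=
  Fintype.piFinset fun _ => Finset.Ico (0 : ℤ) (lam : ℤ)

/-- The translate ξ + (2π/λ)·ρ, i.e. ξ + γ for γ = (2π/λ)ρ ∈ Γ. -/
def gshift (lam n : ℕ) (ξ : Fin n → ℝ) (ρ : Fin n → ℤ) : Fin n → ℝ :=
  fun i => ξ i + (2 * Real.pi / lam) * (ρ i : ℝ)

/-- e^{i ν·ξ}. -/
def eI (n : ℕ) (ν : Fin n → ℤ) (ξ : Fin n → ℝ) : ℂ :=
  Complex.exp (Complex.I * ∑ i, (ν i : ℂ) * (ξ i : ℂ))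

/-- The dilate λ·ξ. -/
def dil (lam n : ℕ) (ξ : Fin n → ℝ) : Fin n → ℝ := fun i => (lam : ℝ) * ξ i
/-- Primitive root of unity. -/
def om (lam : ℕ) : ℂ := Complex.exp (2 * Real.pi * Complex.I / lam)

lemma om_prim (lam : ℕ) (h : 2 ≤ lam) : IsPrimitiveRoot (om lam) lam :=
  Complex.isPrimitiveRoot_exp lam (by omega)

lemma om_ne (lam : ℕ) : om lam ≠ 0 := Complex.exp_ne_zero _

lemma om_conj (lam : ℕ) (k : ℤ) : (starRingEnd ℂ) (om lam ^ k) = om lam ^ (-k) := by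
  rw [om, ← Complex.exp_int_mul, ← Complex.exp_int_mul, ← Complex.exp_conj]
  congr 1
  have h2 : (starRingEnd ℂ) 2 = 2 := Complex.conj_ofNat 2
  simp [h2]
  ring

lemma om_sum (lam : ℕ) (h : 2 ≤ lam) (a b : ℤ) (ha : a ∈ Finset.Ico (0 : ℤ) lam)
    (hb : b ∈ Finset.Ico (0 : ℤ) lam) :
    ∑ k ∈ Finset.Ico (0 : ℤ) lam, om lam ^ ((a - b) * k) = if a = b then (lam : ℂ) else 0 := by
  split_ifs with hab
  · subst hab; simp
  · have h1 : ∑ k ∈ Finset.Ico (0 : ℤ) lam, om lam ^ ((a - b) * k)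
        = ∑ k ∈ Finset.range lam, (om lam ^ (a - b)) ^ k := by
      symm
      apply Finset.sum_bij (fun (k : ℕ) _ => (k : ℤ))
      · intro k hk; simp at hk ⊢; exact hk
      · intro _ _ _ _ h; exact_mod_cast h
      · intro k hk
        simp at hk
        exact ⟨k.toNat, by simp; omega, by omega⟩
      · intro k _
        rw [zpow_mul, zpow_natCast]
    rw [h1]
    have hz : om lam ^ (a - b) ≠ 1 := by
      intro h0
      have := ((om_prim lam h).zpow_eq_one_iff_dvd _).1 h0
      simp at ha hb
      have := Int.eq_zero_of_abs_lt_dvd this (by rw [abs_lt]; omega)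
      omega
    rw [geom_sum_eq hz, ← zpow_natCast, ← zpow_mul, mul_comm, zpow_mul, zpow_natCast,
      (om_prim lam h).pow_eq_one]
    simp

lemma om_orth (lam n : ℕ) (h : 2 ≤ lam) (a b : Fin n → ℤ) (ha : a ∈ Lambda lam n)
    (hb : b ∈ Lambda lam n) :
    ∑ ρ ∈ Lambda lam n, (∏ i, om lam ^ (a i * ρ i)) * (starRingEnd ℂ) (∏ i, om lam ^ (b i * ρ i))
      = if a = b then (lam : ℂ) ^ n else 0 := by
  rw [Lambda, Fintype.mem_piFinset] at ha hb
  have h1 : ∀ ρ : Fin n → ℤ, (∏ i, om lam ^ (a i * ρ i)) *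
      (starRingEnd ℂ) (∏ i, om lam ^ (b i * ρ i)) = ∏ i, om lam ^ ((a i - b i) * ρ i) := by
    intro ρ
    rw [map_prod, ← Finset.prod_mul_distrib]
    refine Finset.prod_congr rfl fun i _ => ?_
    rw [om_conj, ← zpow_add₀ (om_ne lam)]
    congr 1; ring
  simp_rw [h1]
  rw [Lambda, Finset.sum_prod_piFinset (Finset.Ico (0:ℤ) lam) (fun i k => om lam ^ ((a i - b i) * k))]
  simp_rw [fun i => om_sum lam h (a i) (b i) (ha i) (hb i)]
  split_ifs with hab
  · subst hab; simp
  · obtain ⟨i, hi⟩ := Function.ne_iff.1 hab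
    exact Finset.prod_eq_zero (Finset.mem_univ i) (by simp [hi])

lemma eI_shift (lam n : ℕ) (a : Fin n → ℤ) (ξ : Fin n → ℝ) (ρ : Fin n → ℤ) :
    eI n a (gshift lam n ξ ρ) = eI n a ξ * ∏ i, om lam ^ (a i * ρ i) := by
  simp only [eI, gshift, om, ← Complex.exp_int_mul, ← Complex.exp_sum, ← Complex.exp_add]
  congr 1
  rw [Finset.mul_sum, Finset.mul_sum, ← Finset.sum_add_distrib]
  refine Finset.sum_congr rfl fun i _ => ?_
  push_cast
  ring

lemma eI_norm (n : ℕ) (a : Fin n → ℤ) (ξ : Fin n → ℝ) : ‖eI n a ξ‖ = 1 := by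
  have : eI n a ξ = Complex.exp (((∑ i, (a i : ℝ) * ξ i : ℝ) : ℂ) * Complex.I) := by
    rw [eI]; congr 1; push_cast; ring
  rw [this, Complex.norm_exp_ofReal_mul_I]

lemma trig_per (lam n : ℕ) (h : 2 ≤ lam) (f : (Fin n → ℝ) → ℂ) (hf : IsTrigPoly n f)
    (ξ : Fin n → ℝ) (ρ : Fin n → ℤ) : f (dil lam n (gshift lam n ξ ρ)) = f (dil lam n ξ) := by
  obtain ⟨F, c, hc⟩ := hf
  rw [hc, hc]
  refine Finset.sum_congr rfl fun k _ => ?_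
  congr 1
  rw [Complex.exp_eq_exp_iff_exists_int]
  refine ⟨-∑ i, k i * ρ i, ?_⟩
  have hl : (lam : ℂ) ≠ 0 := by exact_mod_cast (by omega : lam ≠ 0)
  simp only [dil, gshift]
  push_cast
  rw [← Finset.sum_neg_distrib, Finset.mul_sum, Finset.mul_sum, Finset.sum_mul,
    ← Finset.sum_add_distrib]
  refine Finset.sum_congr rfl fun i _ => ?_
  field_simp
  ring

lemma parseval (lam n : ℕ) (h : 2 ≤ lam) (ν : Fin (lam ^ n) → Fin n → ℤ)
    (hi : Function.Injective ν) (hm : ∀ l, ν l ∈ Lambda lam n) (a : Fin (lam ^ n) → ℂ) :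
    ∑ ρ ∈ Lambda lam n, ‖∑ l, a l * ∏ i, om lam ^ (ν l i * ρ i)‖ ^ 2
      = (lam : ℝ) ^ n * ∑ l, ‖a l‖ ^ 2 := by
  apply Complex.ofReal_injective
  push_cast
  simp_rw [← Complex.mul_conj', map_sum, Finset.sum_mul_sum]
  rw [Finset.sum_comm, Finset.mul_sum]
  refine Finset.sum_congr rfl fun l _ => ?_
  rw [Finset.sum_comm]
  have : ∀ m, ∑ ρ ∈ Lambda lam n, a l * (∏ i, om lam ^ (ν l i * ρ i)) *
      (starRingEnd ℂ) (a m * ∏ i, om lam ^ (ν m i * ρ i)) =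
      if l = m then a l * (starRingEnd ℂ) (a m) * (lam : ℂ) ^ n else 0 := by
    intro m
    have h2 := om_orth lam n h (ν l) (ν m) (hm l) (hm m)
    simp only [hi.eq_iff] at h2
    rw [← mul_ite_zero, ← h2, Finset.mul_sum]
    refine Finset.sum_congr rfl fun ρ _ => ?_
    rw [map_mul]; ring
  simp_rw [this]
  simp
  ring

/-- under the building-block conditions 1 − |p_l|² = λⁿ Σ_r |g_l^{(r)}|²
(for l ≤ N) and |p_l|² ≡ 1 (for l > N), the mask τ(ξ) = λ^{−n} Σ_l p_l(λξ) e^{iν_l·ξ}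
satisfies 1 − Σ_{γ∈Γ} |τ(ξ+γ)|² = Σ_{l=1}^{N} Σ_{r=1}^{r_l} |g_l^{(r)}(λξ)|². -/
theorem subQMF_identity (lam n N : ℕ) (hlam : 2 ≤ lam) (hn : 1 ≤ n)
    (hN : N ≤ lam ^ n)
    (p : Fin (lam ^ n) → (Fin n → ℝ) → ℂ)
    (R : Fin (lam ^ n) → ℕ)
    (g : (l : Fin (lam ^ n)) → Fin (R l) → (Fin n → ℝ) → ℂ)
    (hp : ∀ l, IsTrigPoly n (p l))
    (hg : ∀ l (r : Fin (R l)), IsTrigPoly n (g l r))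
    (hpg : ∀ l : Fin (lam ^ n), (l : ℕ) < N →
      ∀ ξ, 1 - ‖p l ξ‖ ^ 2 = (lam : ℝ) ^ n * ∑ r, ‖g l r ξ‖ ^ 2)
    (hp1 : ∀ l : Fin (lam ^ n), N ≤ (l : ℕ) → ∀ ξ, ‖p l ξ‖ ^ 2 = 1)
    (ν : Fin (lam ^ n) → Fin n → ℤ)
    (hν_inj : Function.Injective ν) (hν_mem : ∀ l, ν l ∈ Lambda lam n)
    (hν_surj : ∀ ρ ∈ Lambda lam n, ∃ l, ν l = ρ)
    (τ : (Fin n → ℝ) → ℂ)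
    (hτ : ∀ ξ, τ ξ = ((lam : ℂ) ^ n)⁻¹ * ∑ l, p l (dil lam n ξ) * eI n (ν l) ξ)
    (ξ : Fin n → ℝ) :
    1 - ∑ ρ ∈ Lambda lam n, ‖τ (gshift lam n ξ ρ)‖ ^ 2
      = ∑ l ∈ Finset.univ.filter (fun l : Fin (lam ^ n) => (l : ℕ) < N),
          ∑ r, ‖g l r (dil lam n ξ)‖ ^ 2 := by
  have hl : (lam : ℝ) ^ n ≠ 0 := pow_ne_zero _ (by exact_mod_cast (by omega : lam ≠ 0))
  set a : Fin (lam ^ n) → ℂ := fun l => p l (dil lam n ξ) * eI n (ν l) ξ with ha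
  have h1 : ∀ ρ, ‖τ (gshift lam n ξ ρ)‖ ^ 2 =
      (((lam : ℝ) ^ n)⁻¹) ^ 2 * ‖∑ l, a l * ∏ i, om lam ^ (ν l i * ρ i)‖ ^ 2 := by
    intro ρ
    rw [hτ, norm_mul, mul_pow]
    congr 2
    · simp
    · congr 1
      refine Finset.sum_congr rfl fun l _ => ?_
      rw [trig_per lam n hlam _ (hp l), eI_shift, ha, mul_assoc]
  simp_rw [h1]
  rw [← Finset.mul_sum, parseval lam n hlam ν hν_inj hν_mem]
  have h2 : ∀ l, ‖a l‖ ^ 2 = 1 - (lam : ℝ) ^ n *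
      (if (l : ℕ) < N then ∑ r, ‖g l r (dil lam n ξ)‖ ^ 2 else 0) := by
    intro l
    simp only [ha, norm_mul, eI_norm, mul_one]
    split_ifs with hlN
    · rw [← hpg l hlN]; ring
    · rw [hp1 l (by omega)]; ring
  simp_rw [h2]
  rw [Finset.sum_sub_distrib, ← Finset.mul_sum, Finset.sum_filter]
  simp only [Finset.sum_const, Finset.card_univ, Fintype.card_fin, nsmul_eq_mul, mul_one]
  push_cast
  field_simp
  ring
end
end

section
/- Let λ ≥ 2 and n ≥ 1 be integers, let p_1, …, p_{λ^n} be trigonometric polynomials, let ν_1, …, ν_{λ^n} be an enumeration of Λ, and define τ(ξ) = λ^{−n} Σ_{l=1}^{λ^n} p_l(λξ) e^{i ν_l·ξ}. Then for all ξ ∈ ℝⁿ, Σ_{γ∈Γ} |τ(ξ + γ)|² = λ^{−n} Σ_{l=1}^{λ^n} |p_l(λξ)|². -/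
open MeasureTheory Finset Filter Topology

noncomputable section

theorem aux_one (lam : ℕ) (hlam : 2 ≤ lam) (a b : ℤ) (ha : a ∈ Finset.Ico (0:ℤ) lam)
    (hb : b ∈ Finset.Ico (0:ℤ) lam) :
    ∑ r ∈ Finset.Ico (0:ℤ) lam, Complex.exp (2 * Real.pi * Complex.I / lam) ^ ((a - b) * r)
      = if a = b then (lam : ℂ) else 0 := by
  have hprim := Complex.isPrimitiveRoot_exp lam (by omega)
  set ω := Complex.exp (2 * Real.pi * Complex.I / lam) with hω
  have hS : ∑ r ∈ Finset.Ico (0:ℤ) lam, ω ^ ((a - b) * r)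
      = ∑ k ∈ Finset.range lam, (ω ^ (a - b)) ^ k := by
    symm
    refine Finset.sum_bij (fun k _ => (k : ℤ)) ?_ ?_ ?_ ?_
    · intro k hk; simp at hk ⊢; omega
    · intro x _ y _ h; exact_mod_cast h
    · intro r hr
      simp at hr
      exact ⟨r.toNat, by simp; omega, by simp; omega⟩
    · intro k _
      rw [zpow_mul, zpow_natCast]
  rw [hS]
  split_ifs with h
  · subst h; simp
  · have hz : ω ^ (a - b) ≠ 1 := by
      intro h1
      have := (hprim.zpow_eq_one_iff_dvd _).1 h1
      simp at ha hb
      obtain ⟨c, hc⟩ := this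
      have : c = 0 := by
        by_contra hc0
        rcases lt_or_gt_of_ne hc0 with h2 | h2 <;> nlinarith
      subst this
      apply h; linarith
    have h2 := geom_sum_mul (ω ^ (a - b)) lam
    have h3 : (ω ^ (a - b)) ^ lam = 1 := by
      rw [← zpow_natCast, ← zpow_mul, mul_comm, zpow_mul, zpow_natCast, hprim.pow_eq_one, one_zpow]
    rw [h3, sub_self] at h2
    exact (mul_eq_zero.1 h2).resolve_right (sub_ne_zero.2 hz)

theorem aux_n (lam n : ℕ) (hlam : 2 ≤ lam) (a b : Fin n → ℤ) (ha : a ∈ Lambda lam n)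
    (hb : b ∈ Lambda lam n) :
    ∑ ρ ∈ Lambda lam n, ∏ i, Complex.exp (2 * Real.pi * Complex.I / lam) ^ ((a i - b i) * ρ i)
      = if a = b then (lam : ℂ) ^ n else 0 := by
  unfold Lambda at *
  rw [Fintype.mem_piFinset] at ha hb
  rw [← Finset.prod_univ_sum (fun _ => Finset.Ico (0:ℤ) lam)
    (fun i r => Complex.exp (2 * Real.pi * Complex.I / lam) ^ ((a i - b i) * r))]
  rw [Finset.prod_congr rfl (fun i _ => aux_one lam hlam (a i) (b i) (ha i) (hb i))]
  split_ifs with h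
  · subst h; simp
  · obtain ⟨i, hi⟩ := Function.ne_iff.1 h
    exact Finset.prod_eq_zero (Finset.mem_univ i) (by simp [hi])

theorem aux_per (lam n : ℕ) (hlam : 2 ≤ lam) (f : (Fin n → ℝ) → ℂ) (hf : IsTrigPoly n f)
    (ξ : Fin n → ℝ) (ρ : Fin n → ℤ) :
    f (dil lam n (gshift lam n ξ ρ)) = f (dil lam n ξ) := by
  obtain ⟨F, h, hf⟩ := hf
  rw [hf, hf]
  refine Finset.sum_congr rfl fun k _ => ?_
  congr 1
  rw [Complex.exp_eq_exp_iff_exists_int]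
  refine ⟨-∑ i, k i * ρ i, ?_⟩
  have hl : (lam : ℂ) ≠ 0 := by exact_mod_cast (by omega : lam ≠ 0)
  have : ∑ i, (k i : ℂ) * ((dil lam n (gshift lam n ξ ρ) i : ℝ) : ℂ)
      = ∑ i, (k i : ℂ) * ((dil lam n ξ i : ℝ) : ℂ) + (∑ i, (k i : ℂ) * ρ i) * (2 * Real.pi) := by
    rw [Finset.sum_mul, ← Finset.sum_add_distrib]
    refine Finset.sum_congr rfl fun i _ => ?_
    simp only [dil, gshift]
    push_cast
    field_simp
  rw [this]
  push_cast
  ring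

theorem aux_eI (lam n : ℕ) (ν : Fin n → ℤ) (ξ : Fin n → ℝ) (ρ : Fin n → ℤ) :
    eI n ν (gshift lam n ξ ρ) = eI n ν ξ *
      ∏ i, Complex.exp (2 * Real.pi * Complex.I / lam) ^ (ν i * ρ i) := by
  simp only [eI, gshift, ← Complex.exp_int_mul]
  rw [← Complex.exp_sum, ← Complex.exp_add, Finset.mul_sum, Finset.mul_sum,
    ← Finset.sum_add_distrib]
  congr 1
  refine Finset.sum_congr rfl fun i _ => ?_
  push_cast
  ring

theorem aux_norm (n : ℕ) (ν : Fin n → ℤ) (ξ : Fin n → ℝ) : ‖eI n ν ξ‖ = 1 := by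
  have : eI n ν ξ = Complex.exp (((∑ i, (ν i : ℝ) * ξ i : ℝ) : ℂ) * Complex.I) := by
    simp only [eI]; push_cast; rw [mul_comm]
  rw [this, Complex.norm_exp_ofReal_mul_I]

theorem aux_conj (lam : ℕ) (m : ℤ) :
    (starRingEnd ℂ) (Complex.exp (2 * Real.pi * Complex.I / lam) ^ m)
      = Complex.exp (2 * Real.pi * Complex.I / lam) ^ (-m) := by
  rw [← Complex.exp_int_mul, ← Complex.exp_int_mul, ← Complex.exp_conj]
  congr 1
  have h2 : (starRingEnd ℂ) 2 = 2 := Complex.conj_ofNat 2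
  simp [Complex.conj_ofReal, h2]
  ring

/-- for τ(ξ) = λ^{−n} Σ_l p_l(λξ) e^{iν_l·ξ} with ν_1,…,ν_{λⁿ} an
enumeration of Λ, one has Σ_{γ∈Γ} |τ(ξ+γ)|² = λ^{−n} Σ_l |p_l(λξ)|². -/
theorem sum_sq_mask_translates (lam n : ℕ) (hlam : 2 ≤ lam) (hn : 1 ≤ n)
    (p : Fin (lam ^ n) → (Fin n → ℝ) → ℂ) (hp : ∀ l, IsTrigPoly n (p l))
    (ν : Fin (lam ^ n) → Fin n → ℤ)
    (hν_inj : Function.Injective ν) (hν_mem : ∀ l, ν l ∈ Lambda lam n)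
    (hν_surj : ∀ ρ ∈ Lambda lam n, ∃ l, ν l = ρ)
    (τ : (Fin n → ℝ) → ℂ)
    (hτ : ∀ ξ, τ ξ = ((lam : ℂ) ^ n)⁻¹ * ∑ l, p l (dil lam n ξ) * eI n (ν l) ξ)
    (ξ : Fin n → ℝ) :
    ∑ ρ ∈ Lambda lam n, ‖τ (gshift lam n ξ ρ)‖ ^ 2
      = ((lam : ℝ) ^ n)⁻¹ * ∑ l, ‖p l (dil lam n ξ)‖ ^ 2 := by
  have hl : (lam : ℂ) ≠ 0 := by exact_mod_cast (by omega : lam ≠ 0)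
  set ω := Complex.exp (2 * Real.pi * Complex.I / lam) with hω
  have hω0 : ω ≠ 0 := Complex.exp_ne_zero _
  set c : Fin (lam ^ n) → ℂ := fun l => p l (dil lam n ξ) * eI n (ν l) ξ with hc
  have hcn : ∀ l, ‖p l (dil lam n ξ)‖ = ‖c l‖ := fun l => by
    simp [hc, aux_norm]
  have hτ' : ∀ ρ, τ (gshift lam n ξ ρ)
      = ((lam : ℂ) ^ n)⁻¹ * ∑ l, c l * ∏ i, ω ^ (ν l i * ρ i) := fun ρ => by
    rw [hτ]
    congr 1
    refine Finset.sum_congr rfl fun l _ => ?_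
    rw [aux_per lam n hlam _ (hp l), aux_eI, ← mul_assoc]
  apply Complex.ofReal_injective
  push_cast
  simp only [hcn, ← Complex.mul_conj']
  have key : ∀ ρ, τ (gshift lam n ξ ρ) * (starRingEnd ℂ) (τ (gshift lam n ξ ρ))
      = ((lam : ℂ) ^ n)⁻¹ * ((lam : ℂ) ^ n)⁻¹ * ∑ l, ∑ m, c l * (starRingEnd ℂ) (c m) *
        ∏ i, ω ^ ((ν l i - ν m i) * ρ i) := fun ρ => by
    rw [hτ']
    simp only [map_mul, map_inv₀, map_pow, Complex.conj_natCast, map_sum, map_prod, hω, aux_conj]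
    rw [mul_mul_mul_comm, Finset.sum_mul_sum]
    congr 1
    refine Finset.sum_congr rfl fun l _ => Finset.sum_congr rfl fun m _ => ?_
    rw [mul_mul_mul_comm, ← Finset.prod_mul_distrib]
    congr 1
    refine Finset.prod_congr rfl fun i _ => ?_
    rw [← zpow_add₀ (Complex.exp_ne_zero _)]
    congr 1
    ring
  simp only [key]
  rw [← Finset.mul_sum, Finset.sum_comm]
  have h2 : ∀ l, ∑ ρ ∈ Lambda lam n, ∑ m, c l * (starRingEnd ℂ) (c m) *
        ∏ i, ω ^ ((ν l i - ν m i) * ρ i) = c l * (starRingEnd ℂ) (c l) * (lam : ℂ) ^ n := by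
    intro l
    rw [Finset.sum_comm]
    simp only [← Finset.mul_sum, hω, aux_n lam n hlam _ _ (hν_mem l) (hν_mem _), hν_inj.eq_iff]
    simp
  simp only [h2]
  rw [← Finset.sum_mul]
  field_simp
end
end

section
/- Let λ ≥ 2 and n ≥ 1 be integers, let p_1, …, p_{λ^n} be trigonometric polynomials with real coefficients satisfying p_l(0) = 1 for all l, let ν_1, …, ν_{λ^n} be an enumeration of Λ, define τ(ξ) = λ^{−n} Σ_{l=1}^{λ^n} p_l(λξ) e^{i ν_l·ξ}, and define q_{2,m}(ξ) = λ^{−n/2} (e^{i ν_m·ξ} − τ(ξ)·conj(p_m(λξ))) for 1 ≤ m ≤ λ^n. Let α ∈ ℕ₀ⁿ be a multi-index with |α| = 1, say α = e_j. Then D^α q_{2,m}(0) = 0 for all 1 ≤ m ≤ λ^n if and only if for every 1 ≤ m ≤ λ^n − 1, D^α p_m(0) − D^α p_{λ^n}(0) = (−i/λ)·((ν_m)_j − (ν_{λ^n})_j). -/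
open MeasureTheory Finset Filter Topology

noncomputable section

/-- `f` is a trigonometric polynomial with real coefficients. -/
def IsRealTrigPoly (n : ℕ) (f : (Fin n → ℝ) → ℂ) : Prop :=
  ∃ (F : Finset (Fin n → ℤ)) (h : (Fin n → ℤ) → ℝ),
    ∀ ξ : Fin n → ℝ,
      f ξ = ∑ k ∈ F, (h k : ℂ) * Complex.exp (-Complex.I * ∑ i, (k i : ℂ) * (ξ i : ℂ))

lemma aux_lin (n : ℕ) (k : Fin n → ℤ) (c : ℂ) (x : Fin n → ℝ) :
    DifferentiableAt ℝ (fun ξ : Fin n → ℝ => Complex.exp (c * ∑ i, (k i : ℂ) * (ξ i : ℂ))) x := by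
  have h : ∀ i, DifferentiableAt ℝ (fun ξ : Fin n → ℝ => ((ξ i : ℝ) : ℂ)) x := fun i =>
    Complex.ofRealCLM.differentiableAt.comp x (differentiableAt_apply i x)
  fun_prop

lemma aux_diff (n : ℕ) (f : (Fin n → ℝ) → ℂ) (hf : IsRealTrigPoly n f) : Differentiable ℝ f := by
  obtain ⟨F, h, hf⟩ := hf
  obtain rfl : f = _ := funext hf
  intro x
  have := fun k => aux_lin n k (-Complex.I) x
  fun_prop

lemma aux_conj_s4 (n : ℕ) (f : (Fin n → ℝ) → ℂ) (hf : IsRealTrigPoly n f) (ξ : Fin n → ℝ) :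
    (starRingEnd ℂ) (f ξ) = f (-ξ) := by
  obtain ⟨F, h, hf⟩ := hf
  rw [hf, hf, map_sum]
  refine Finset.sum_congr rfl fun k _ => ?_
  rw [map_mul, ← Complex.exp_conj]
  simp [map_sum]

lemma aux_dil (lam n : ℕ) (f : (Fin n → ℝ) → ℂ) (hf : Differentiable ℝ f) (c : ℝ) (v : Fin n → ℝ) :
    HasDerivAt (fun t : ℝ => f ((c * t) • v)) ((c : ℂ) * fderiv ℝ f 0 v) 0 := by
  have h1 : HasDerivAt (fun t : ℝ => (c * t) • v) (c • v) 0 := by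
    simpa using (((hasDerivAt_id (0:ℝ)).const_mul c).smul_const v)
  have h2 : HasFDerivAt f (fderiv ℝ f 0) ((c * (0:ℝ)) • v) := by
    simpa using (hf 0).hasFDerivAt
  exact (h2.comp_hasDerivAt (0:ℝ) h1).congr_deriv (by simp)

lemma aux_eI_s4 (n : ℕ) (k : Fin n → ℤ) (j : Fin n) :
    HasDerivAt (fun t : ℝ => eI n k (t • (Pi.single j 1))) (Complex.I * (k j : ℂ)) 0 := by
  have : (fun t : ℝ => eI n k (t • (Pi.single j 1))) =
      fun t : ℝ => Complex.exp (Complex.I * ((k j : ℂ) * (t : ℂ))) := by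
    funext t
    unfold eI
    congr 2
    rw [Finset.sum_eq_single j]
    · simp
    · intro b _ hb; simp [hb]
    · simp
  rw [this]
  have h1 : HasDerivAt (fun t : ℝ => (t : ℂ)) 1 0 := Complex.ofRealCLM.hasDerivAt
  simpa using ((h1.const_mul (k j : ℂ)).const_mul Complex.I).cexp

/-- first-order vanishing-moment criterion for the wavelet masks q_{2,m}.
For α = e_j, D^α q_{2,m}(0) = 0 for all m iff for every m < λⁿ (other than the last),
D^α p_m(0) − D^α p_{λⁿ}(0) = (−i/λ)((ν_m)_j − (ν_{λⁿ})_j). -/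
theorem q2_first_vanishing_moment_iff (lam n : ℕ) (hlam : 2 ≤ lam) (hn : 1 ≤ n)
    (p : Fin (lam ^ n) → (Fin n → ℝ) → ℂ)
    (hp : ∀ l, IsRealTrigPoly n (p l))
    (hp0 : ∀ l, p l 0 = 1)
    (ν : Fin (lam ^ n) → Fin n → ℤ)
    (hν_inj : Function.Injective ν) (hν_mem : ∀ l, ν l ∈ Lambda lam n)
    (hν_surj : ∀ ρ ∈ Lambda lam n, ∃ l, ν l = ρ)
    (τ : (Fin n → ℝ) → ℂ)
    (hτ : ∀ ξ, τ ξ = ((lam : ℂ) ^ n)⁻¹ * ∑ l, p l (dil lam n ξ) * eI n (ν l) ξ)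
    (q2 : Fin (lam ^ n) → (Fin n → ℝ) → ℂ)
    (hq2 : ∀ m ξ, q2 m ξ = ((Real.sqrt ((lam : ℝ) ^ n))⁻¹ : ℂ) *
      (eI n (ν m) ξ - τ ξ * (starRingEnd ℂ) (p m (dil lam n ξ))))
    (j : Fin n) :
    (∀ m, fderiv ℝ (q2 m) 0 (Pi.single j 1) = 0) ↔
      (∀ m : Fin (lam ^ n), (m : ℕ) < lam ^ n - 1 →
        fderiv ℝ (p m) 0 (Pi.single j 1)
          - fderiv ℝ (p ⟨lam ^ n - 1, Nat.sub_lt (pow_pos (by omega) n) one_pos⟩) 0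
              (Pi.single j 1)
          = (-Complex.I / (lam : ℂ)) *
            ((ν m j : ℂ) -
              (ν ⟨lam ^ n - 1, Nat.sub_lt (pow_pos (by omega) n) one_pos⟩ j : ℂ))) := by
  have hl0 : (lam : ℂ) ≠ 0 := by
    have : lam ≠ 0 := by omega
    exact_mod_cast this
  have hN0 : (lam : ℂ) ^ n ≠ 0 := pow_ne_zero _ hl0
  have hd : ∀ l, Differentiable ℝ (p l) := fun l => aux_diff n _ (hp l)
  have hdil : ∀ (t : ℝ), dil lam n (t • (Pi.single j 1)) = ((lam : ℝ) * t) • (Pi.single j 1) := by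
    intro t; funext i; simp [dil, mul_assoc]
  have heI0 : ∀ k, eI n k 0 = 1 := by intro k; simp [eI]
  have hcd : ∀ (k : Fin n → ℤ), Differentiable ℝ (eI n k) := fun k x => aux_lin n k Complex.I x
  have hdd : Differentiable ℝ (dil lam n) := by unfold dil; fun_prop
  set a : Fin (lam ^ n) → ℂ := fun l => fderiv ℝ (p l) 0 (Pi.single j 1) with ha
  set b : Fin (lam ^ n) → ℂ := fun l => (lam : ℂ) * a l + Complex.I * (ν l j : ℂ) with hb
  have hτ0 : τ 0 = 1 := by
    have : dil lam n 0 = 0 := by funext i; simp [dil]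
    rw [hτ]; simp [this, hp0, heI0, hN0]
  have hτ' : HasDerivAt (fun t : ℝ => τ (t • (Pi.single j 1)))
      (((lam : ℂ) ^ n)⁻¹ * ∑ l, b l) 0 := by
    simp only [hτ, hdil]
    refine HasDerivAt.const_mul _ (HasDerivAt.fun_sum fun l _ => ?_)
    have := (aux_dil lam n (p l) (hd l) lam (Pi.single j 1)).mul (aux_eI_s4 n (ν l) j)
    exact this.congr_deriv (by simp [hp0, heI0, hb, ha])
  have hτd : Differentiable ℝ τ := by
    rw [show τ = _ from funext hτ]
    have : ∀ l, Differentiable ℝ (fun ξ => p l (dil lam n ξ)) := fun l => (hd l).comp hdd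
    fun_prop
  have hqd : ∀ m, Differentiable ℝ (q2 m) := by
    intro m
    rw [show q2 m = _ from funext (hq2 m)]
    simp only [aux_conj_s4 n _ (hp m)]
    have : Differentiable ℝ (fun ξ => p m (-dil lam n ξ)) := (hd m).comp hdd.neg
    fun_prop
  have hq' : ∀ m, fderiv ℝ (q2 m) 0 (Pi.single j 1) = ((Real.sqrt ((lam : ℝ) ^ n))⁻¹ : ℂ) *
      (b m - ((lam : ℂ) ^ n)⁻¹ * ∑ l, b l) := by
    intro m
    have h1 : HasDerivAt (fun t : ℝ => q2 m (t • (Pi.single j 1)))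
        (fderiv ℝ (q2 m) 0 (Pi.single j 1)) 0 := by
      simpa using aux_dil lam n (q2 m) (hqd m) 1 (Pi.single j 1)
    refine h1.unique ?_
    simp only [hq2, aux_conj_s4 n _ (hp m), hdil]
    refine HasDerivAt.const_mul _ ?_
    have h2 := aux_dil lam n (p m) (hd m) (-lam) (Pi.single j 1)
    have h3 := (aux_eI_s4 n (ν m) j).sub (hτ'.mul h2)
    simp only [neg_mul, neg_smul] at h3
    refine h3.congr_deriv ?_
    simp [hp0, hτ0, hb, ha]
    ring
  have hc : ((Real.sqrt ((lam : ℝ) ^ n))⁻¹ : ℂ) ≠ 0 := by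
    have : (0:ℝ) < Real.sqrt ((lam : ℝ) ^ n) := by
      have : 0 < lam := by omega
      positivity
    exact inv_ne_zero (by exact_mod_cast this.ne')
  have hL : lam ^ n - 1 < lam ^ n := Nat.sub_lt (pow_pos (by omega) n) one_pos
  set L : Fin (lam ^ n) := ⟨lam ^ n - 1, hL⟩ with hLdef
  have key : ∀ m, (a m - a L = (-Complex.I / (lam : ℂ)) * ((ν m j : ℂ) - (ν L j : ℂ))) ↔
      b m = b L := by
    intro m
    rw [div_mul_eq_mul_div, eq_div_iff hl0]
    simp only [hb]
    constructor <;> intro h <;> linear_combination h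
  simp only [hq', mul_eq_zero, hc, false_or, sub_eq_zero]
  constructor
  · intro h m _
    exact (key m).2 ((h m).trans (h L).symm)
  · intro h
    have hall : ∀ m, b m = b L := by
      intro m
      by_cases hm : (m : ℕ) < lam ^ n - 1
      · exact (key m).1 (h m hm)
      · have : m = L := by
          apply Fin.ext
          have := m.2
          simp only [hLdef]
          omega
        rw [this]
    intro m
    simp only [hall, Finset.sum_const, Finset.card_univ, Fintype.card_fin, nsmul_eq_mul]
    push_cast
    field_simp
end
end

section
/- Let λ ≥ 2 and n ≥ 1 be integers and N ≤ λ^n. Let S be a rational trigonometric polynomial nonnegative on ℝⁿ. For each 1 ≤ l ≤ N suppose rational trigonometric polynomials p_l and g_l satisfy 1/S(ξ) − |p_l(ξ)|² = λⁿ |g_l(ξ)|² for all ξ at which both sides are defined, and if N < λ^n, for l = N+1, …, λ^n let p_l be rational trigonometric polynomials with |p_l(ξ)|² = 1/S(ξ). Let s be a rational trigonometric polynomial with |s(ξ)|² = 1/S(ξ), let ν_1, …, ν_{λ^n} enumerate Λ, and define τ(ξ) = (λ^{−n} Σ_{l=1}^{λ^n} p_l(λξ) e^{i ν_l·ξ})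 / conj(s(ξ)). Then for all ξ at which both sides are defined, 1/S(λξ) − Σ_{γ∈Γ} |τ(ξ + γ)|² / S(ξ + γ) = Σ_{l=1}^{N} |g_l(λξ)|². -/
open MeasureTheory Finset Filter Topology

noncomputable section

/-- A rational trigonometric polynomial: a quotient of two trigonometric polynomials
(with denominator not identically zero).  Its value at ξ (using Lean's total division,
with junk value 0 where the denominator vanishes) is `num ξ / den ξ`; it is *defined*
at ξ precisely when `den ξ ≠ 0`. -/
structure RatTrigPoly (n : ℕ) where
  num : (Fin n → ℝ) → ℂ
  den : (Fin n → ℝ) → ℂ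
  num_trig : IsTrigPoly n num
  den_trig : IsTrigPoly n den
  den_ne : ∃ ξ, den ξ ≠ 0

/-- Pointwise value of a rational trigonometric polynomial. -/
def RatTrigPoly.eval {n : ℕ} (f : RatTrigPoly n) (ξ : Fin n → ℝ) : ℂ := f.num ξ / f.den ξ

instance {n : ℕ} : CoeFun (RatTrigPoly n) (fun _ => (Fin n → ℝ) → ℂ) := ⟨RatTrigPoly.eval⟩

/-- `f` is defined at `ξ` iff its denominator does not vanish there. -/
def RatTrigPoly.DefinedAt {n : ℕ} (f : RatTrigPoly n) (ξ : Fin n → ℝ) : Prop := f.den ξ ≠ 0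
lemma aux_periodic {n : ℕ} {f : (Fin n → ℝ) → ℂ} (hf : IsTrigPoly n f) (x : Fin n → ℝ)
    (ρ : Fin n → ℤ) : f (fun i => x i + 2 * Real.pi * (ρ i : ℝ)) = f x := by
  obtain ⟨F, h, hF⟩ := hf
  rw [hF, hF]
  refine Finset.sum_congr rfl fun k _ => ?_
  congr 1
  rw [Complex.exp_eq_exp_iff_exists_int]
  refine ⟨-∑ i, k i * ρ i, ?_⟩
  push_cast
  simp only [mul_add, Finset.sum_add_distrib]
  have : ∑ i, (k i : ℂ) * (2 * (Real.pi : ℂ) * (ρ i : ℂ))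
      = 2 * (Real.pi : ℂ) * ∑ i, (k i : ℂ) * (ρ i : ℂ) := by
    rw [Finset.mul_sum]
    exact Finset.sum_congr rfl fun i _ => by ring
  rw [this]; ring

lemma aux_rat_periodic {n lam : ℕ} (hlam : 2 ≤ lam) (f : RatTrigPoly n) (ξ : Fin n → ℝ)
    (ρ : Fin n → ℤ) : f (dil lam n (gshift lam n ξ ρ)) = f (dil lam n ξ) := by
  have h : dil lam n (gshift lam n ξ ρ)
      = fun i => dil lam n ξ i + 2 * Real.pi * (ρ i : ℝ) := by
    funext i
    have : (lam : ℝ) ≠ 0 := by positivity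
    simp only [dil, gshift]
    field_simp
  simp only [RatTrigPoly.eval]
  rw [h, aux_periodic f.num_trig, aux_periodic f.den_trig]

lemma aux_geom (lam : ℕ) (hlam : 2 ≤ lam) (k : ℤ) (hk : |k| < lam) (hk0 : k ≠ 0) :
    ∑ r ∈ Finset.Ico (0 : ℤ) (lam : ℤ),
      Complex.exp (2 * Real.pi * Complex.I / lam * (k * r)) = 0 := by
  have hl : (lam : ℂ) ≠ 0 := by
    have : lam ≠ 0 := by omega
    exact_mod_cast this
  have h1 : ∑ r ∈ Finset.Ico (0 : ℤ) (lam : ℤ),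
      Complex.exp (2 * Real.pi * Complex.I / lam * (k * r))
      = ∑ r ∈ Finset.range lam, (Complex.exp (2 * Real.pi * Complex.I / lam * k)) ^ r := by
    symm
    refine Finset.sum_bij (fun r _ => (r : ℤ)) ?_ ?_ ?_ ?_
    · intro a ha; simp at ha ⊢; exact ha
    · intro a _ b _ h; exact_mod_cast h
    · intro b hb
      simp at hb
      exact ⟨b.toNat, by simp; omega, by simp; omega⟩
    · intro a _
      rw [← Complex.exp_nat_mul]
      congr 1
      push_cast; ring
  rw [h1]
  have hne : Complex.exp (2 * Real.pi * Complex.I / lam * k) ≠ 1 := by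
    intro h
    rw [Complex.exp_eq_one_iff] at h
    obtain ⟨m, hm⟩ := h
    have hpi : (2 * Real.pi * Complex.I : ℂ) ≠ 0 := Complex.two_pi_I_ne_zero
    have h2 : (k : ℂ) = m * lam := by
      field_simp at hm
      apply mul_left_cancel₀ hpi
      linear_combination (2 * Real.pi * Complex.I : ℂ) * hm
    have h3 : k = m * lam := by exact_mod_cast h2
    have : (lam : ℤ) ∣ k := ⟨m, by rw [h3]; ring⟩
    exact hk0 (Int.eq_zero_of_abs_lt_dvd this hk)
  rw [geom_sum_eq hne, ← Complex.exp_nat_mul]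
  have : (lam : ℂ) * (2 * Real.pi * Complex.I / lam * k) = k * (2 * Real.pi * Complex.I) := by
    field_simp
  rw [this, Complex.exp_int_mul_two_pi_mul_I]
  simp

lemma aux_orth (lam n : ℕ) (hlam : 2 ≤ lam) (a b : Fin n → ℤ) (ha : a ∈ Lambda lam n)
    (hb : b ∈ Lambda lam n) (ξ : Fin n → ℝ) :
    ∑ ρ ∈ Lambda lam n, eI n a (gshift lam n ξ ρ) * (starRingEnd ℂ) (eI n b (gshift lam n ξ ρ))
      = if a = b then (lam : ℂ) ^ n else 0 := by
  have key : ∀ ρ : Fin n → ℤ,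
      eI n a (gshift lam n ξ ρ) * (starRingEnd ℂ) (eI n b (gshift lam n ξ ρ))
      = eI n (a - b) ξ * ∏ i, Complex.exp (2 * Real.pi * Complex.I / lam *
          (((a i - b i : ℤ) : ℂ) * (ρ i : ℂ))) := by
    intro ρ
    rw [← Complex.exp_sum]
    simp only [eI, ← Complex.exp_conj, ← Complex.exp_add]
    congr 1
    simp only [map_mul, map_sum, Complex.conj_I, Complex.conj_ofReal, map_intCast, gshift,
      Finset.mul_sum, ← Finset.sum_add_distrib, Pi.sub_apply]
    refine Finset.sum_congr rfl fun i _ => ?_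
    push_cast
    ring
  simp only [key]
  rw [← Finset.mul_sum]
  have hprod := Finset.prod_univ_sum (fun _ : Fin n => Finset.Ico (0 : ℤ) (lam : ℤ))
    (fun i (r : ℤ) => Complex.exp (2 * Real.pi * Complex.I / lam *
          (((a i - b i : ℤ) : ℂ) * (r : ℂ))))
  rw [Lambda, ← hprod]
  split_ifs with h
  · subst h
    simp [eI]
  · obtain ⟨i, hi⟩ := Function.ne_iff.mp h
    simp only [Lambda, Fintype.mem_piFinset, Finset.mem_Ico] at ha hb
    have h1 := ha i
    have h2 := hb i
    rw [Finset.prod_eq_zero (Finset.mem_univ i)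
      (aux_geom lam hlam (a i - b i) (by rw [abs_lt]; omega) (by omega)), mul_zero]

lemma aux_parseval (lam n : ℕ) (hlam : 2 ≤ lam) (ν : Fin (lam ^ n) → Fin n → ℤ)
    (hν_inj : Function.Injective ν) (hν_mem : ∀ l, ν l ∈ Lambda lam n) (ξ : Fin n → ℝ)
    (c : Fin (lam ^ n) → ℂ) :
    ∑ ρ ∈ Lambda lam n, ((‖∑ l, c l * eI n (ν l) (gshift lam n ξ ρ)‖ ^ 2 : ℝ) : ℂ)
      = (lam : ℂ) ^ n * ∑ l, ((‖c l‖ ^ 2 : ℝ) : ℂ) := by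
  have hsq : ∀ z : ℂ, ((‖z‖ ^ 2 : ℝ) : ℂ) = z * (starRingEnd ℂ) z := by
    intro z; rw [Complex.mul_conj, Complex.normSq_eq_norm_sq]
  simp only [hsq, map_sum, map_mul, Finset.sum_mul_sum]
  rw [Finset.sum_comm, Finset.mul_sum]
  refine Finset.sum_congr rfl fun l _ => ?_
  rw [Finset.sum_comm]
  have : ∀ m, ∑ ρ ∈ Lambda lam n, c l * eI n (ν l) (gshift lam n ξ ρ) *
      ((starRingEnd ℂ) (c m) * (starRingEnd ℂ) (eI n (ν m) (gshift lam n ξ ρ)))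
      = if l = m then c l * (starRingEnd ℂ) (c m) * (lam : ℂ) ^ n else 0 := by
    intro m
    have h := aux_orth lam n hlam (ν l) (ν m) (hν_mem l) (hν_mem m) ξ
    simp only [hν_inj.eq_iff] at h
    rw [← mul_ite_zero, ← h, Finset.mul_sum]
    exact Finset.sum_congr rfl fun ρ _ => by ring
  simp only [this]
  rw [Finset.sum_ite_eq]
  simp [mul_comm]

/-- the oblique sub-QMF identity for the shared-responsibility mask:
1/S(λξ) − Σ_{γ∈Γ} |τ(ξ+γ)|²/S(ξ+γ) = Σ_{l=1}^{N} |g_l(λξ)|²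
wherever everything is defined. -/
theorem oblique_subQMF_identity (lam n N : ℕ) (hlam : 2 ≤ lam) (hn : 1 ≤ n)
    (hN : N ≤ lam ^ n)
    (S : RatTrigPoly n)
    (hSreal : ∀ ξ, S.DefinedAt ξ → (S ξ).im = 0 ∧ 0 ≤ (S ξ).re)
    (p : Fin (lam ^ n) → RatTrigPoly n)
    (g : Fin (lam ^ n) → RatTrigPoly n)
    (hpg : ∀ l : Fin (lam ^ n), (l : ℕ) < N →
      ∀ ξ, S.DefinedAt ξ → S ξ ≠ 0 → (p l).DefinedAt ξ → (g l).DefinedAt ξ →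
        (S ξ)⁻¹ - ((‖p l ξ‖ ^ 2 : ℝ) : ℂ) = (lam : ℂ) ^ n * ((‖g l ξ‖ ^ 2 : ℝ) : ℂ))
    (hp1 : ∀ l : Fin (lam ^ n), N ≤ (l : ℕ) →
      ∀ ξ, S.DefinedAt ξ → S ξ ≠ 0 → (p l).DefinedAt ξ →
        ((‖p l ξ‖ ^ 2 : ℝ) : ℂ) = (S ξ)⁻¹)
    (s : RatTrigPoly n)
    (hs : ∀ ξ, s.DefinedAt ξ → S.DefinedAt ξ → S ξ ≠ 0 →
      ((‖s ξ‖ ^ 2 : ℝ) : ℂ) = (S ξ)⁻¹)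
    (ν : Fin (lam ^ n) → Fin n → ℤ)
    (hν_inj : Function.Injective ν) (hν_mem : ∀ l, ν l ∈ Lambda lam n)
    (hν_surj : ∀ ρ ∈ Lambda lam n, ∃ l, ν l = ρ)
    (τ : (Fin n → ℝ) → ℂ)
    (hτ : ∀ ξ, τ ξ = (((lam : ℂ) ^ n)⁻¹ * ∑ l, p l (dil lam n ξ) * eI n (ν l) ξ)
      / (starRingEnd ℂ) (s ξ))
    (ξ : Fin n → ℝ)
    (hdef : ∀ ρ ∈ Lambda lam n,
      s.DefinedAt (gshift lam n ξ ρ) ∧ s (gshift lam n ξ ρ) ≠ 0 ∧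
      S.DefinedAt (gshift lam n ξ ρ) ∧ S (gshift lam n ξ ρ) ≠ 0 ∧
      ∀ l, (p l).DefinedAt (dil lam n (gshift lam n ξ ρ)))
    (hdef' : ∀ l, (p l).DefinedAt (dil lam n ξ) ∧ (g l).DefinedAt (dil lam n ξ))
    (hdefS : S.DefinedAt (dil lam n ξ) ∧ S (dil lam n ξ) ≠ 0) :
    (S (dil lam n ξ))⁻¹
        - ∑ ρ ∈ Lambda lam n,
            ((‖τ (gshift lam n ξ ρ)‖ ^ 2 : ℝ) : ℂ) / S (gshift lam n ξ ρ)
      = ∑ l ∈ Finset.univ.filter (fun l : Fin (lam ^ n) => (l : ℕ) < N),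
          ((‖g l (dil lam n ξ)‖ ^ 2 : ℝ) : ℂ) := by
  have hl : (lam : ℂ) ^ n ≠ 0 := by
    have : lam ≠ 0 := by omega
    exact pow_ne_zero _ (by exact_mod_cast this)
  have h1 : ∀ ρ ∈ Lambda lam n,
      ((‖τ (gshift lam n ξ ρ)‖ ^ 2 : ℝ) : ℂ) / S (gshift lam n ξ ρ)
      = (((lam : ℂ) ^ n)⁻¹) ^ 2 *
        ((‖∑ l, p l (dil lam n ξ) * eI n (ν l) (gshift lam n ξ ρ)‖ ^ 2 : ℝ) : ℂ) := by
    intro ρ hρ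
    obtain ⟨hs1, hs2, hS1, hS2, -⟩ := hdef ρ hρ
    have hss := hs _ hs1 hS1 hS2
    rw [hτ]
    simp only [aux_rat_periodic hlam]
    rw [norm_div, norm_mul, RCLike.norm_conj, div_pow, Complex.ofReal_div, hss, mul_pow,
      norm_inv, norm_pow, Complex.norm_natCast]
    push_cast
    field_simp
  rw [Finset.sum_congr rfl h1, ← Finset.mul_sum, aux_parseval lam n hlam ν hν_inj hν_mem]
  have h2 : ∀ l, ((‖p l (dil lam n ξ)‖ ^ 2 : ℝ) : ℂ) = (S (dil lam n ξ))⁻¹ -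
      (if (l : ℕ) < N then (lam : ℂ) ^ n * ((‖g l (dil lam n ξ)‖ ^ 2 : ℝ) : ℂ) else 0) := by
    intro l
    split_ifs with h
    · rw [← hpg l h _ hdefS.1 hdefS.2 (hdef' l).1 (hdef' l).2]; ring
    · rw [hp1 l (not_lt.mp h) _ hdefS.1 hdefS.2 (hdef' l).1]; ring
  simp only [h2]
  rw [Finset.sum_sub_distrib, ← Finset.sum_filter, ← Finset.mul_sum, Finset.sum_const,
    Finset.card_univ, Fintype.card_fin, nsmul_eq_mul]
  push_cast
  field_simp
  ring
end
end

section
/- Let λ ≥ 2 and n ≥ 1 be integers. Let S be a nonzero rational trigonometric polynomial nonnegative on ℝⁿ, let τ be a rational trigonometric polynomial with τ(0) = 1, and let s be a rational trigonometric polynomial with |s(ξ)|² = 1/S(ξ) wherever defined. Suppose there exist rational trigonometric polynomials g_1, …, g_L such that 1/S(λξ) − Σ_{γ∈Γ} |τ(ξ + γ)|²/S(ξ + γ) = Σ_{l=1}^{L} |g_l(λξ)|² for all ξ at which both sides are defined. For 1 ≤ m ≤ λ^n set a_m(ξ) := λ^{−n/2} e^{i ν_m·ξ} s(ξ), where ν_1,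 …, ν_{λ^n} enumerate Λ, and define q_{1,l}(ξ) = S(λξ) τ(ξ) conj(g_l(λξ)) for 1 ≤ l ≤ L and q_{2,m}(ξ) = S(ξ) a_m(ξ) − S(λξ) τ(ξ) Σ_{γ∈Γ} conj(τ(ξ+γ)) a_m(ξ+γ) for 1 ≤ m ≤ λ^n. Then for every γ ∈ Γ and all ξ at which both sides are defined: S(λξ) τ(ξ) conj(τ(ξ+γ)) + Σ_{l=1}^{L} q_{1,l}(ξ) conj(q_{1,l}(ξ+γ)) + Σ_{m=1}^{λ^n} q_{2,m}(ξ) conj(q_{2,m}(ξ+γ)) equals S(ξ) if γ = 0 and equals 0 if γ ∈ Γ∖{0}. -/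
open MeasureTheory Finset Filter Topology

noncomputable section

lemma trig_analytic {n : ℕ} {f : (Fin n → ℝ) → ℂ} (hf : IsTrigPoly n f) :
    AnalyticOnNhd ℝ f Set.univ := by
  obtain ⟨F, h, hF⟩ := hf
  have : f = fun ξ => ∑ k ∈ F, h k * Complex.exp (-Complex.I * ∑ i, (k i : ℂ) * (ξ i : ℂ)) :=
    funext hF
  rw [this]
  intro x _
  apply Finset.analyticAt_fun_sum
  intro k _
  apply AnalyticAt.mul analyticAt_const
  have hc : AnalyticAt ℝ Complex.exp (-Complex.I * ∑ i, (k i : ℂ) * (x i : ℂ)) :=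
    (analyticAt_cexp).restrictScalars
  refine hc.fun_comp (f := fun ξ : Fin n → ℝ => -Complex.I * ∑ i, (k i : ℂ) * (ξ i : ℂ)) ?_
  apply AnalyticAt.mul analyticAt_const
  apply Finset.analyticAt_fun_sum
  intro i _
  apply AnalyticAt.mul analyticAt_const
  exact ((Complex.ofRealCLM.comp (ContinuousLinearMap.proj (R := ℝ) (φ := fun _ : Fin n => ℝ) i))).analyticAt x

lemma trig_freq {n : ℕ} {f : (Fin n → ℝ) → ℂ} (hf : IsTrigPoly n f) {y : Fin n → ℝ}
    (hy : f y ≠ 0) (x : Fin n → ℝ) : ∃ᶠ z in 𝓝 x, f z ≠ 0 := by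
  intro h
  have h' : f =ᶠ[𝓝 x] 0 := by
    filter_upwards [h] with z hz
    simpa using hz
  exact hy ((trig_analytic hf).eqOn_zero_of_preconnected_of_eventuallyEq_zero
    isPreconnected_univ (Set.mem_univ x) h' (Set.mem_univ y))

lemma trig_cont {n : ℕ} {f : (Fin n → ℝ) → ℂ} (hf : IsTrigPoly n f) : Continuous f :=
  continuous_iff_continuousAt.2 fun x => (trig_analytic hf x (Set.mem_univ x)).continuousAt

lemma trig_per_s10 {n : ℕ} {f : (Fin n → ℝ) → ℂ} (hf : IsTrigPoly n f) (x y : Fin n → ℝ)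
    (m : Fin n → ℤ) (h : ∀ i, y i = x i + 2 * Real.pi * m i) : f y = f x := by
  obtain ⟨F, c, hF⟩ := hf
  rw [hF, hF]
  refine Finset.sum_congr rfl fun k _ => ?_
  congr 1
  rw [Complex.exp_eq_exp_iff_exists_int]
  refine ⟨-∑ i, k i * m i, ?_⟩
  push_cast
  rw [neg_mul, neg_mul, neg_mul, ← neg_add, neg_inj, Finset.mul_sum, Finset.mul_sum,
    Finset.sum_mul, ← Finset.sum_add_distrib]
  refine Finset.sum_congr rfl fun i _ => ?_
  rw [h i]; push_cast; ring

lemma rat_per {n : ℕ} (f : RatTrigPoly n) (x y : Fin n → ℝ)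
    (m : Fin n → ℤ) (h : ∀ i, y i = x i + 2 * Real.pi * m i) : f y = f x := by
  simp only [RatTrigPoly.eval, trig_per_s10 f.num_trig x y m h, trig_per_s10 f.den_trig x y m h]

lemma eI_per {n : ℕ} (k : Fin n → ℤ) (x y : Fin n → ℝ)
    (m : Fin n → ℤ) (h : ∀ i, y i = x i + 2 * Real.pi * m i) : eI n k y = eI n k x := by
  refine trig_per_s10 (f := eI n k) ⟨{-k}, fun _ => 1, fun ξ => ?_⟩ x y m h
  simp [eI]

lemma S_s {n : ℕ} (S s : RatTrigPoly n) (hSne : ∃ ξ, S.DefinedAt ξ ∧ S ξ ≠ 0)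
    (hs : ∀ ξ, s.DefinedAt ξ → S.DefinedAt ξ → S ξ ≠ 0 →
      ((‖s ξ‖ ^ 2 : ℝ) : ℂ) = (S ξ)⁻¹) (x : Fin n → ℝ) (h1 : s.DefinedAt x)
    (h2 : S.DefinedAt x) : ((‖s x‖ ^ 2 : ℝ) : ℂ) * S x = 1 := by
  obtain ⟨y, hy1, hy2⟩ := hSne
  have hy : S.num y ≠ 0 := fun h => hy2 (by simp [RatTrigPoly.eval, h])
  have hc : ∀ (f : RatTrigPoly n), f.DefinedAt x → ContinuousAt f.eval x := fun f hf =>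
    (trig_cont f.num_trig).continuousAt.div (trig_cont f.den_trig).continuousAt hf
  have hcont : ContinuousAt (fun z => ((‖s z‖ ^ 2 : ℝ) : ℂ) * S z) x :=
    (Complex.continuous_ofReal.continuousAt.comp ((hc s h1).norm.pow 2)).mul (hc S h2)
  have hd : ∀ (f : RatTrigPoly n), f.DefinedAt x → ∀ᶠ z in 𝓝 x, f.DefinedAt z := fun f hf =>
    (trig_cont f.den_trig).continuousAt.eventually_ne hf
  have hfr : ∃ᶠ z in 𝓝 x, ((‖s z‖ ^ 2 : ℝ) : ℂ) * S z = 1 := by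
    refine ((trig_freq S.num_trig hy x).and_eventually ((hd s h1).and (hd S h2))).mono ?_
    rintro z ⟨hz, hz1, hz2⟩
    have : S z ≠ 0 := div_ne_zero hz hz2
    rw [hs z hz1 hz2 this, inv_mul_cancel₀ this]
  by_contra hne
  exact hfr ((hcont.eventually_ne hne))

lemma geom1 (lam : ℕ) (hlam : 2 ≤ lam) (d : ℤ) (hd : |d| < lam) :
    ∑ j ∈ Finset.Ico (0:ℤ) lam, Complex.exp (2 * Real.pi * Complex.I * (d / lam)) ^ j.toNat
      = if d = 0 then (lam : ℂ) else 0 := by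
  have h0 : (lam : ℂ) ≠ 0 := by norm_cast; omega
  set z := Complex.exp (2 * Real.pi * Complex.I * (d / lam)) with hz
  have h1 : ∑ j ∈ Finset.Ico (0:ℤ) lam, z ^ j.toNat = ∑ j ∈ Finset.range lam, z ^ j := by
    refine Finset.sum_nbij' (fun j => j.toNat) (fun j => (j:ℤ)) ?_ ?_ ?_ ?_ ?_
    · intro j hj; simp only [Finset.mem_Ico, Finset.mem_range] at *; omega
    · intro j hj; simp only [Finset.mem_Ico, Finset.mem_range] at *; omega
    · intro j hj; simp only [Finset.mem_Ico] at *; omega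
    · intro j hj; simp
    · intro j hj; rfl
  rw [h1]
  split_ifs with h
  · simp [hz, h]
  · have hz1 : z ≠ 1 := by
      intro hh
      rw [hz, Complex.exp_eq_one_iff] at hh
      obtain ⟨k, hk⟩ := hh
      have hpi : (2 * Real.pi * Complex.I : ℂ) ≠ 0 := Complex.two_pi_I_ne_zero
      have : (d / lam : ℂ) = k := by
        apply mul_left_cancel₀ hpi; rw [hk]; ring
      rw [div_eq_iff h0] at this
      have h3 : d = k * lam := by exact_mod_cast this
      have : k ≠ 0 := by rintro rfl; simp at h3; exact h h3
      rw [h3, abs_mul] at hd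
      have h5 : 1 ≤ |k| := Int.one_le_abs this
      simp only [Nat.abs_cast] at hd
      nlinarith
    have hzl : z ^ lam = 1 := by
      rw [hz, ← Complex.exp_nat_mul, Complex.exp_eq_one_iff]
      exact ⟨d, by field_simp⟩
    rw [geom_sum_eq hz1, hzl]; simp

lemma orth (lam n : ℕ) (hlam : 2 ≤ lam) (ξ : Fin n → ℝ) (ρ ρ' : Fin n → ℤ)
    (h : ρ ∈ Lambda lam n) (h' : ρ' ∈ Lambda lam n) :
    ∑ k ∈ Lambda lam n, eI n k (gshift lam n ξ ρ) * (starRingEnd ℂ) (eI n k (gshift lam n ξ ρ'))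
      = if ρ = ρ' then (lam : ℂ) ^ n else 0 := by
  have h0 : (lam : ℂ) ≠ 0 := by norm_cast; omega
  simp only [Lambda, Fintype.mem_piFinset, Finset.mem_Ico] at h h'
  have key : ∀ k ∈ Lambda lam n,
      eI n k (gshift lam n ξ ρ) * (starRingEnd ℂ) (eI n k (gshift lam n ξ ρ'))
      = ∏ i, Complex.exp (2 * Real.pi * Complex.I * (((ρ i - ρ' i : ℤ) : ℂ) / lam)) ^ (k i).toNat := by
    intro k hk
    simp only [Lambda, Fintype.mem_piFinset, Finset.mem_Ico] at hk
    have : ∀ i, Complex.exp (2 * Real.pi * Complex.I * (((ρ i - ρ' i : ℤ) : ℂ) / lam)) ^ (k i).toNat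
        = Complex.exp ((k i : ℂ) * (2 * Real.pi * Complex.I * (((ρ i - ρ' i : ℤ) : ℂ) / lam))) := by
      intro i
      rw [← Complex.exp_nat_mul]
      congr 2
      have : ((k i).toNat : ℤ) = k i := Int.toNat_of_nonneg (hk i).1
      exact_mod_cast congrArg (Int.cast : ℤ → ℂ) this
    simp only [this]
    rw [← Complex.exp_sum, eI, eI, ← Complex.exp_conj, ← Complex.exp_add]
    congr 1
    simp only [map_mul, map_sum, Complex.conj_I, Complex.conj_ofReal, map_intCast, Finset.mul_sum,
      ← Finset.sum_add_distrib, gshift]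
    refine Finset.sum_congr rfl fun i _ => ?_
    push_cast
    field_simp
    ring
  rw [Finset.sum_congr rfl key, Lambda, ← Finset.prod_univ_sum (fun _ => Finset.Ico (0:ℤ) lam)
    (fun i j => Complex.exp (2 * Real.pi * Complex.I * (((ρ i - ρ' i : ℤ) : ℂ) / lam)) ^ j.toNat)]
  have : ∀ i, ∑ j ∈ Finset.Ico (0:ℤ) lam, Complex.exp (2 * Real.pi * Complex.I * (((ρ i - ρ' i : ℤ) : ℂ) / lam)) ^ j.toNat = if ρ i - ρ' i = 0 then (lam : ℂ) else 0 := by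
    intro i
    apply geom1 lam hlam
    have := h i; have := h' i
    rw [abs_lt]; omega
  simp only [this]
  split_ifs with hh
  · simp [hh]
  · obtain ⟨i, hi⟩ := Function.ne_iff.1 hh
    exact Finset.prod_eq_zero (Finset.mem_univ i) (by rw [if_neg]; omega)

lemma shift_sum (lam n : ℕ) (hlam : 2 ≤ lam) (F : (Fin n → ℝ) → ℂ)
    (hF : ∀ (x y : Fin n → ℝ) (m : Fin n → ℤ), (∀ i, y i = x i + 2 * Real.pi * m i) → F y = F x)
    (ξ : Fin n → ℝ) (ρ₀ : Fin n → ℤ) :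
    ∑ ρ ∈ Lambda lam n, F (gshift lam n (gshift lam n ξ ρ₀) ρ)
      = ∑ ρ ∈ Lambda lam n, F (gshift lam n ξ ρ) := by
  have hl : (0:ℤ) < lam := by omega
  have hl' : (lam : ℝ) ≠ 0 := by norm_cast; omega
  refine Finset.sum_nbij' (fun ρ i => (ρ i + ρ₀ i) % lam) (fun ρ i => (ρ i - ρ₀ i) % lam)
    ?_ ?_ ?_ ?_ ?_
  · intro ρ _
    simp only [Lambda, Fintype.mem_piFinset, Finset.mem_Ico]
    exact fun i => ⟨Int.emod_nonneg _ hl.ne', Int.emod_lt_of_pos _ hl⟩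
  · intro ρ _
    simp only [Lambda, Fintype.mem_piFinset, Finset.mem_Ico]
    exact fun i => ⟨Int.emod_nonneg _ hl.ne', Int.emod_lt_of_pos _ hl⟩
  · intro ρ hρ
    simp only [Lambda, Fintype.mem_piFinset, Finset.mem_Ico] at hρ
    funext i
    simp only [Int.emod_sub_emod, add_sub_cancel_right]
    exact Int.emod_eq_of_lt (hρ i).1 (hρ i).2
  · intro ρ hρ
    simp only [Lambda, Fintype.mem_piFinset, Finset.mem_Ico] at hρ
    funext i
    simp only [Int.emod_add_emod, sub_add_cancel]
    exact Int.emod_eq_of_lt (hρ i).1 (hρ i).2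
  · intro ρ _
    refine hF _ _ (fun i => (ρ i + ρ₀ i) / lam) fun i => ?_
    have h : (((ρ i + ρ₀ i) % lam + lam * ((ρ i + ρ₀ i) / lam) : ℤ) : ℝ) = ((ρ i + ρ₀ i : ℤ) : ℝ) := by
      rw [Int.emod_add_mul_ediv]
    push_cast at h
    simp only [gshift]
    field_simp
    push_cast
    linear_combination (-2 * Real.pi) * h

/-- if f_{τ,S} admits the SOS representation Σ_l |g_l(λξ)|², then the
masks q_{1,l}, q_{2,m} built from the SOS generators satisfy the OEP condition:
S(λξ)τ(ξ)conj(τ(ξ+γ)) + Σ_l q_{1,l}(ξ)conj(q_{1,l}(ξ+γ)) + Σ_m q_{2,m}(ξ)conj(q_{2,m}(ξ+γ))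
equals S(ξ) for γ = 0 and 0 for γ ∈ Γ∖{0}, wherever everything is defined. -/
theorem OEP_from_SOS (lam n L : ℕ) (hlam : 2 ≤ lam) (hn : 1 ≤ n)
    (S : RatTrigPoly n)
    (hSreal : ∀ ξ, S.DefinedAt ξ → (S ξ).im = 0 ∧ 0 ≤ (S ξ).re)
    (hSne : ∃ ξ, S.DefinedAt ξ ∧ S ξ ≠ 0)
    (τ : RatTrigPoly n) (hτdef : τ.DefinedAt 0) (hτ0 : τ 0 = 1)
    (s : RatTrigPoly n)
    (hs : ∀ ξ, s.DefinedAt ξ → S.DefinedAt ξ → S ξ ≠ 0 →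
      ((‖s ξ‖ ^ 2 : ℝ) : ℂ) = (S ξ)⁻¹)
    (g : Fin L → RatTrigPoly n)
    (hSOS : ∀ ξ : Fin n → ℝ,
      (S.DefinedAt (dil lam n ξ) ∧ S (dil lam n ξ) ≠ 0) →
      (∀ ρ ∈ Lambda lam n, τ.DefinedAt (gshift lam n ξ ρ) ∧
        S.DefinedAt (gshift lam n ξ ρ) ∧ S (gshift lam n ξ ρ) ≠ 0) →
      (∀ l, (g l).DefinedAt (dil lam n ξ)) →
      (S (dil lam n ξ))⁻¹
          - ∑ ρ ∈ Lambda lam n,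
              ((‖τ (gshift lam n ξ ρ)‖ ^ 2 : ℝ) : ℂ) / S (gshift lam n ξ ρ)
        = ∑ l, ((‖g l (dil lam n ξ)‖ ^ 2 : ℝ) : ℂ))
    (ν : Fin (lam ^ n) → Fin n → ℤ)
    (hν_inj : Function.Injective ν) (hν_mem : ∀ m, ν m ∈ Lambda lam n)
    (hν_surj : ∀ ρ ∈ Lambda lam n, ∃ m, ν m = ρ)
    (a : Fin (lam ^ n) → (Fin n → ℝ) → ℂ)
    (ha : ∀ m ξ, a m ξ = ((Real.sqrt ((lam : ℝ) ^ n))⁻¹ : ℂ) * eI n (ν m) ξ * s ξ)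
    (q1 : Fin L → (Fin n → ℝ) → ℂ)
    (hq1 : ∀ l ξ, q1 l ξ = S (dil lam n ξ) * τ ξ * (starRingEnd ℂ) (g l (dil lam n ξ)))
    (q2 : Fin (lam ^ n) → (Fin n → ℝ) → ℂ)
    (hq2 : ∀ m ξ, q2 m ξ = S ξ * a m ξ -
      S (dil lam n ξ) * τ ξ *
        ∑ ρ ∈ Lambda lam n,
          (starRingEnd ℂ) (τ (gshift lam n ξ ρ)) * a m (gshift lam n ξ ρ)) :
    ∀ ρ₀ ∈ Lambda lam n, ∀ ξ : Fin n → ℝ,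
      (∀ ρ ∈ Lambda lam n, ∀ ρ' ∈ Lambda lam n,
        τ.DefinedAt (gshift lam n (gshift lam n ξ ρ) ρ') ∧
        S.DefinedAt (gshift lam n (gshift lam n ξ ρ) ρ') ∧
        s.DefinedAt (gshift lam n (gshift lam n ξ ρ) ρ')) →
      (τ.DefinedAt ξ ∧ S.DefinedAt ξ ∧ s.DefinedAt ξ ∧
        S.DefinedAt (dil lam n ξ) ∧ S.DefinedAt (dil lam n (gshift lam n ξ ρ₀))) →
      (∀ l, (g l).DefinedAt (dil lam n ξ) ∧
        (g l).DefinedAt (dil lam n (gshift lam n ξ ρ₀))) →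
      S (dil lam n ξ) * τ ξ * (starRingEnd ℂ) (τ (gshift lam n ξ ρ₀))
        + (∑ l, q1 l ξ * (starRingEnd ℂ) (q1 l (gshift lam n ξ ρ₀)))
        + (∑ m, q2 m ξ * (starRingEnd ℂ) (q2 m (gshift lam n ξ ρ₀)))
      = if ρ₀ = 0 then S ξ else 0 := by
  intro ρ₀ hρ₀ ξ hdef ⟨hτξ, hSξ, hsξ, hSd, hSd'⟩ hg
  have hl0 : (lam : ℝ) ≠ 0 := by norm_cast; omega
  have hl0c : (lam : ℂ) ≠ 0 := by norm_cast; omega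
  have hz : (0 : Fin n → ℤ) ∈ Lambda lam n := by
    simp only [Lambda, Fintype.mem_piFinset, Finset.mem_Ico, Pi.zero_apply]
    intro i; omega
  have hg0 : ∀ x, gshift lam n x 0 = x := by
    intro x; funext i; simp [gshift]
  have hdefs : ∀ ρ ∈ Lambda lam n, τ.DefinedAt (gshift lam n ξ ρ) ∧
      S.DefinedAt (gshift lam n ξ ρ) ∧ s.DefinedAt (gshift lam n ξ ρ) := by
    intro ρ hρ
    have := hdef ρ hρ 0 hz
    rwa [hg0] at this
  have hSs : ∀ ρ ∈ Lambda lam n,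
      ((‖s (gshift lam n ξ ρ)‖ ^ 2 : ℝ) : ℂ) * S (gshift lam n ξ ρ) = 1 := fun ρ hρ =>
    S_s S s hSne hs _ (hdefs ρ hρ).2.2 (hdefs ρ hρ).2.1
  have hSnz : ∀ ρ ∈ Lambda lam n, S (gshift lam n ξ ρ) ≠ 0 := by
    intro ρ hρ h
    have := hSs ρ hρ
    rw [h] at this; simp at this
  have hconj : ∀ x, S.DefinedAt x → (starRingEnd ℂ) (S x) = S x := fun x hx =>
    Complex.conj_eq_iff_im.2 (hSreal x hx).1
  -- periodicity of the dilates
  have hdil : ∀ i, dil lam n (gshift lam n ξ ρ₀) i = dil lam n ξ i + 2 * Real.pi * ρ₀ i := by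
    intro i; simp only [dil, gshift]; field_simp
  have hSdil : S (dil lam n (gshift lam n ξ ρ₀)) = S (dil lam n ξ) := rat_per S _ _ ρ₀ hdil
  have hgdil : ∀ l, g l (dil lam n (gshift lam n ξ ρ₀)) = g l (dil lam n ξ) :=
    fun l => rat_per (g l) _ _ ρ₀ hdil
  -- sums over the enumeration
  have hsumν : ∀ F : (Fin n → ℤ) → ℂ, ∑ m, F (ν m) = ∑ k ∈ Lambda lam n, F k := by
    intro F
    refine Finset.sum_bij (fun m _ => ν m) (fun m _ => hν_mem m)
      (fun m _ m' _ h => hν_inj h) ?_ (fun m _ => rfl)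
    intro k hk
    obtain ⟨m, hm⟩ := hν_surj k hk
    exact ⟨m, Finset.mem_univ m, hm⟩
  -- orthogonality
  have hsq : ((Real.sqrt ((lam : ℝ) ^ n) : ℝ) : ℂ) * ((Real.sqrt ((lam : ℝ) ^ n) : ℝ) : ℂ)
      = (lam : ℂ) ^ n := by
    rw [← Complex.ofReal_mul, Real.mul_self_sqrt (by positivity)]; push_cast; rfl
  have orthA : ∀ ρ ∈ Lambda lam n, ∀ ρ' ∈ Lambda lam n,
      ∑ m, a m (gshift lam n ξ ρ) * (starRingEnd ℂ) (a m (gshift lam n ξ ρ'))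
        = if ρ = ρ' then (S (gshift lam n ξ ρ))⁻¹ else 0 := by
    intro ρ hρ ρ' hρ'
    have e1 : ∀ m, a m (gshift lam n ξ ρ) * (starRingEnd ℂ) (a m (gshift lam n ξ ρ'))
        = ((lam : ℂ) ^ n)⁻¹ * (s (gshift lam n ξ ρ) * (starRingEnd ℂ) (s (gshift lam n ξ ρ'))) *
          (eI n (ν m) (gshift lam n ξ ρ) * (starRingEnd ℂ) (eI n (ν m) (gshift lam n ξ ρ'))) := by
      intro m
      rw [ha, ha, ← hsq, mul_inv]
      simp only [map_mul, map_inv₀, Complex.conj_ofReal]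
      ring
    rw [Finset.sum_congr rfl fun m _ => e1 m, ← Finset.mul_sum,
      hsumν (fun k => eI n k (gshift lam n ξ ρ) * (starRingEnd ℂ) (eI n k (gshift lam n ξ ρ'))),
      orth lam n hlam ξ ρ ρ' hρ hρ']
    split_ifs with h
    · subst h
      have h2 := hSs ρ hρ
      rw [Complex.mul_conj', ← Complex.ofReal_pow, eq_inv_of_mul_eq_one_left h2]
      field_simp
    · simp
  set B : Fin (lam ^ n) → ℂ := fun m => ∑ ρ ∈ Lambda lam n,
    (starRingEnd ℂ) (τ (gshift lam n ξ ρ)) * a m (gshift lam n ξ ρ) with hB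
  have hBshift : ∀ m, ∑ ρ ∈ Lambda lam n,
      (starRingEnd ℂ) (τ (gshift lam n (gshift lam n ξ ρ₀) ρ)) *
        a m (gshift lam n (gshift lam n ξ ρ₀) ρ) = B m := by
    intro m
    refine shift_sum lam n hlam (fun x => (starRingEnd ℂ) (τ x) * a m x) ?_ ξ ρ₀
    intro x y k hk
    simp only [ha]
    rw [rat_per τ x y k hk, rat_per s x y k hk, eI_per (ν m) x y k hk]
  have E1 : ∀ ρ ∈ Lambda lam n, ∑ m, a m (gshift lam n ξ ρ) * (starRingEnd ℂ) (B m)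
      = τ (gshift lam n ξ ρ) * (S (gshift lam n ξ ρ))⁻¹ := by
    intro ρ hρ
    simp only [hB, map_sum, map_mul, Complex.conj_conj, Finset.mul_sum]
    rw [Finset.sum_comm]
    have : ∀ ρ' ∈ Lambda lam n, ∑ m, a m (gshift lam n ξ ρ) *
        (τ (gshift lam n ξ ρ') * (starRingEnd ℂ) (a m (gshift lam n ξ ρ')))
        = if ρ = ρ' then τ (gshift lam n ξ ρ') * (S (gshift lam n ξ ρ))⁻¹ else 0 := by
      intro ρ' hρ'
      have h3 := orthA ρ hρ ρ' hρ'
      simp only [mul_left_comm _ (τ (gshift lam n ξ ρ')), ← Finset.mul_sum, h3, mul_ite, mul_zero]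
    rw [Finset.sum_congr rfl this, Finset.sum_ite_eq, if_pos hρ]
  have E2 : ∑ m, B m * (starRingEnd ℂ) (a m (gshift lam n ξ ρ₀))
      = (starRingEnd ℂ) (τ (gshift lam n ξ ρ₀)) * (S (gshift lam n ξ ρ₀))⁻¹ := by
    have h4 := congrArg (starRingEnd ℂ) (E1 ρ₀ hρ₀)
    simp only [map_sum, map_mul, Complex.conj_conj, map_inv₀, hconj _ (hdefs ρ₀ hρ₀).2.1] at h4
    rw [← h4]
    exact Finset.sum_congr rfl fun m _ => mul_comm _ _
  have E3 : ∑ m, B m * (starRingEnd ℂ) (B m) = ∑ ρ ∈ Lambda lam n,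
      ((‖τ (gshift lam n ξ ρ)‖ ^ 2 : ℝ) : ℂ) / S (gshift lam n ξ ρ) := by
    have h5 : ∀ m, B m * (starRingEnd ℂ) (B m) = ∑ ρ ∈ Lambda lam n,
        (starRingEnd ℂ) (τ (gshift lam n ξ ρ)) *
          (a m (gshift lam n ξ ρ) * (starRingEnd ℂ) (B m)) := by
      intro m
      conv_lhs => rw [hB]
      simp only [Finset.sum_mul, mul_assoc]
      rfl
    rw [Finset.sum_congr rfl fun m _ => h5 m, Finset.sum_comm]
    refine Finset.sum_congr rfl fun ρ hρ => ?_
    rw [← Finset.mul_sum, E1 ρ hρ, ← mul_assoc, Complex.conj_mul', div_eq_mul_inv]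
    push_cast; rfl
  have E0 := orthA 0 hz ρ₀ hρ₀
  have E1' := E1 0 hz
  rw [hg0] at E1'
  simp only [hg0] at E0
  have hS0 : S ξ ≠ 0 := by have := hSnz 0 hz; rwa [hg0] at this
  have hS1 : S (gshift lam n ξ ρ₀) ≠ 0 := hSnz ρ₀ hρ₀
  -- the first family
  have Q1 : ∑ l, q1 l ξ * (starRingEnd ℂ) (q1 l (gshift lam n ξ ρ₀))
      = S (dil lam n ξ) ^ 2 * τ ξ * (starRingEnd ℂ) (τ (gshift lam n ξ ρ₀)) *
        ∑ l, ((‖g l (dil lam n ξ)‖ ^ 2 : ℝ) : ℂ) := by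
    rw [Finset.mul_sum]
    refine Finset.sum_congr rfl fun l _ => ?_
    rw [hq1, hq1, hSdil, hgdil]
    simp only [map_mul, Complex.conj_conj, hconj _ hSd]
    rw [Complex.ofReal_pow, ← Complex.conj_mul']
    ring
  -- the second family
  have Q2 : ∑ m, q2 m ξ * (starRingEnd ℂ) (q2 m (gshift lam n ξ ρ₀))
      = S ξ * S (gshift lam n ξ ρ₀) *
          (∑ m, a m ξ * (starRingEnd ℂ) (a m (gshift lam n ξ ρ₀)))
        - S ξ * S (dil lam n ξ) * (starRingEnd ℂ) (τ (gshift lam n ξ ρ₀)) *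
          (∑ m, a m ξ * (starRingEnd ℂ) (B m))
        - S (dil lam n ξ) * τ ξ * S (gshift lam n ξ ρ₀) *
          (∑ m, B m * (starRingEnd ℂ) (a m (gshift lam n ξ ρ₀)))
        + S (dil lam n ξ) ^ 2 * τ ξ * (starRingEnd ℂ) (τ (gshift lam n ξ ρ₀)) *
          (∑ m, B m * (starRingEnd ℂ) (B m)) := by
    simp only [Finset.mul_sum, ← Finset.sum_sub_distrib, ← Finset.sum_add_distrib]
    refine Finset.sum_congr rfl fun m _ => ?_
    rw [hq2, hq2, hSdil, hBshift]
    change (S ξ * a m ξ - S (dil lam n ξ) * τ ξ * B m) * _ = _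
    simp only [map_mul, map_sub, hconj _ hSd, hconj _ (hdefs ρ₀ hρ₀).2.1]
    ring
  have hδ : S ξ * S (gshift lam n ξ ρ₀) * (if (0 : Fin n → ℤ) = ρ₀ then (S ξ)⁻¹ else 0)
      = if ρ₀ = 0 then S ξ else 0 := by
    by_cases h : ρ₀ = 0
    · subst h
      simp only [hg0, if_true]
      field_simp
    · rw [if_neg h, if_neg (Ne.symm h), mul_zero]
  rw [Q1, Q2, E0, hδ, E1', E2, E3]
  by_cases hT : S (dil lam n ξ) = 0
  · rw [hT]; ring
  · have hsos := hSOS ξ ⟨hSd, hT⟩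
      (fun ρ hρ => ⟨(hdefs ρ hρ).1, (hdefs ρ hρ).2.1, hSnz ρ hρ⟩) (fun l => (hg l).1)
    rw [← hsos]
    field_simp
    ring
end
end
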